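/- For every GAP instance, every ε ∈ (0,1/6), and every p ∈ (0,1], there exist a set Q ⊆ E and a real number d with 1 ≤ d ≤ 2·⌈1/ε⌉·(K+2)·(τ(ε²)/p + 1), where K := ⌈ln(1/ε³)/ln(1+ε²)⌉, such that (1/d)·1_Q lies in the convex hull in ℝ^E of the indicator vectors {1_S : S ⊆ E feasible}, and E_R[GAP(Q ∩ R)] ≥ (1 − 6ε)·E_R[GAP(R)], where R is the p-sampled active set of E. -/

import Mathlib

open Finset

/-- `τ(ε) := 1 + ln(1/ε) + √(ln²(1/ε) + 2 ln(1/ε))`. -/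
noncomputable def tau (ε : ℝ) : ℝ :=
  1 + Real.log (1 / ε) + Real.sqrt ((Real.log (1 / ε)) ^ 2 + 2 * Real.log (1 / ε))

/-- Expectation of `f` over the random active set `R ⊆ E` obtained by `p`-sampling. -/
noncomputable def sampleExp {ι : Type*} [DecidableEq ι] (E : Finset ι) (p : ℝ)
    (f : Finset ι → ℝ) : ℝ :=
  ∑ A ∈ E.powerset, p ^ A.card * (1 - p) ^ (E.card - A.card) * f A

/-- Total value of a partial assignment `σ` of items (within the ground set `E`)
to knapsacks: `v(σ) = ∑_{i ∈ dom σ} v_{i,σ(i)}`. -/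
noncomputable def assignValue {ι : Type*} {m : ℕ} (E : Finset ι)
    (v : ι → Fin m → ℝ) (σ : ι → Option (Fin m)) : ℝ :=
  ∑ i ∈ E, (σ i).elim 0 (v i)

/-- Total weight placed by the partial assignment `σ` into knapsack `j`. -/
noncomputable def knapWeight {ι : Type*} [DecidableEq ι] {m : ℕ} (E : Finset ι)
    (w : ι → Fin m → ℝ) (σ : ι → Option (Fin m)) (j : Fin m) : ℝ :=
  ∑ i ∈ E, if σ i = some j then w i j else 0

/-- `GAP(A)`: the maximum value of a feasible assignment whose domain lies in `A`. -/
noncomputable def gapOPT {ι : Type*} [DecidableEq ι] {m : ℕ} (E : Finset ι)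
    (C : Fin m → ℝ) (v w : ι → Fin m → ℝ) (A : Finset ι) : ℝ :=
  sSup {x : ℝ | ∃ σ : ι → Option (Fin m), (∀ i, σ i ≠ none → i ∈ A) ∧
    (∀ j, knapWeight E w σ j ≤ C j) ∧ x = assignValue E v σ}

lemma sE_insert {ι : Type*} [DecidableEq ι] (E : Finset ι) (p : ℝ) (f : Finset ι → ℝ)
    (a : ι) (ha : a ∉ E) :
    sampleExp (insert a E) p f
      = p * sampleExp E p (fun A => f (insert a A)) + (1 - p) * sampleExp E p f := by
  unfold sampleExp
  rw [Finset.sum_powerset_insert ha, add_comm, Finset.mul_sum, Finset.mul_sum]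
  congr 1
  · apply Finset.sum_congr rfl
    intro A hA
    have hA' := Finset.mem_powerset.1 hA
    have h1 : a ∉ A := fun h => ha (hA' h)
    rw [Finset.card_insert_of_notMem h1, Finset.card_insert_of_notMem ha]
    have : E.card + 1 - (A.card + 1) = E.card - A.card := by omega
    rw [this]; ring
  · apply Finset.sum_congr rfl
    intro A hA
    have hA' := Finset.card_le_card (Finset.mem_powerset.1 hA)
    rw [Finset.card_insert_of_notMem ha]
    have : E.card + 1 - A.card = (E.card - A.card) + 1 := by omega
    rw [this]; ring

lemma sE_mono {ι : Type*} [DecidableEq ι] {E : Finset ι} {p : ℝ} (hp : 0 ≤ p) (hp1 : p ≤ 1)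
    {f g : Finset ι → ℝ} (h : ∀ A, A ⊆ E → f A ≤ g A) :
    sampleExp E p f ≤ sampleExp E p g := by
  unfold sampleExp
  apply Finset.sum_le_sum
  intro A hA
  apply mul_le_mul_of_nonneg_left (h A (Finset.mem_powerset.1 hA))
  have : 0 ≤ 1 - p := by linarith
  positivity

lemma sE_congr {ι : Type*} [DecidableEq ι] {E : Finset ι} {p : ℝ}
    {f g : Finset ι → ℝ} (h : ∀ A, A ⊆ E → f A = g A) :
    sampleExp E p f = sampleExp E p g := by
  unfold sampleExp
  apply Finset.sum_congr rfl
  intro A hA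
  rw [h A (Finset.mem_powerset.1 hA)]

lemma sE_add {ι : Type*} [DecidableEq ι] (E : Finset ι) (p : ℝ) (f g : Finset ι → ℝ) :
    sampleExp E p (fun A => f A + g A) = sampleExp E p f + sampleExp E p g := by
  unfold sampleExp
  rw [← Finset.sum_add_distrib]
  apply Finset.sum_congr rfl; intros; ring

lemma sE_sub {ι : Type*} [DecidableEq ι] (E : Finset ι) (p : ℝ) (f g : Finset ι → ℝ) :
    sampleExp E p (fun A => f A - g A) = sampleExp E p f - sampleExp E p g := by
  unfold sampleExp
  rw [← Finset.sum_sub_distrib]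
  apply Finset.sum_congr rfl; intros; ring

lemma sE_mul {ι : Type*} [DecidableEq ι] (E : Finset ι) (p : ℝ) (c : ℝ) (f : Finset ι → ℝ) :
    sampleExp E p (fun A => c * f A) = c * sampleExp E p f := by
  unfold sampleExp
  rw [Finset.mul_sum]
  apply Finset.sum_congr rfl; intros; ring

lemma sE_sum {ι κ : Type*} [DecidableEq ι] (E : Finset ι) (p : ℝ) (s : Finset κ)
    (f : κ → Finset ι → ℝ) :
    sampleExp E p (fun A => ∑ k ∈ s, f k A) = ∑ k ∈ s, sampleExp E p (f k) := by
  unfold sampleExp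
  rw [Finset.sum_comm]
  apply Finset.sum_congr rfl; intros; rw [Finset.mul_sum]

lemma sE_const {ι : Type*} [DecidableEq ι] (E : Finset ι) (p : ℝ) (c : ℝ) :
    sampleExp E p (fun _ => c) = c := by
  induction E using Finset.induction_on with
  | empty => simp [sampleExp]
  | insert a E ha ih => rw [sE_insert _ _ _ _ ha, ih]; ring

lemma sE_union {ι : Type*} [DecidableEq ι] (E F : Finset ι) (p : ℝ) (h : Disjoint E F)
    (f : Finset ι → ℝ) :
    sampleExp (E ∪ F) p f = sampleExp E p (fun A => sampleExp F p (fun B => f (A ∪ B))) := by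
  induction E using Finset.induction_on generalizing f with
  | empty => simp [sampleExp]
  | insert a E ha ih =>
    rw [Finset.disjoint_insert_left] at h
    rw [Finset.insert_union, sE_insert _ _ _ _ (by simp [ha, h.1]), sE_insert _ _ _ _ ha,
      ih h.2, ih h.2]
    simp only [Finset.insert_union]

lemma sE_exp {ι : Type*} [DecidableEq ι] (E : Finset ι) (p : ℝ) (hp : 0 ≤ p) (hp1 : p ≤ 1)
    (x : ι → ℝ) (hx : ∀ i, 0 ≤ x i) (hx1 : ∀ i, x i ≤ 1) (s : ℝ) :
    sampleExp E p (fun A => Real.exp (-s * ∑ i ∈ A, x i))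
      ≤ Real.exp (-(1 - Real.exp (-s)) * (p * ∑ i ∈ E, x i)) := by
  induction E using Finset.induction_on with
  | empty => simp [sampleExp]
  | insert a E ha ih =>
    rw [sE_insert _ _ _ _ ha, Finset.sum_insert ha]
    have h1 : sampleExp E p (fun A => Real.exp (-s * ∑ i ∈ insert a A, x i))
        = Real.exp (-s * x a) * sampleExp E p (fun A => Real.exp (-s * ∑ i ∈ A, x i)) := by
      rw [← sE_mul]
      apply sE_congr
      intro A hA
      rw [Finset.sum_insert (fun h => ha (hA h)), mul_add, Real.exp_add]
    rw [h1]
    have h2 : Real.exp (-s * x a) ≤ 1 - x a * (1 - Real.exp (-s)) := by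
      have := convexOn_exp.2 (Set.mem_univ (0:ℝ)) (Set.mem_univ (-s))
        (show 0 ≤ 1 - x a by linarith [hx1 a]) (hx a) (by ring)
      simp only [smul_eq_mul, mul_zero, zero_add, Real.exp_zero, mul_one] at this
      rw [mul_comm (-s)]
      linarith
    have h3 : p * Real.exp (-s * x a) + (1 - p) ≤ Real.exp (-(1 - Real.exp (-s)) * (p * x a)) := by
      have := Real.add_one_le_exp (-(1 - Real.exp (-s)) * (p * x a))
      have := mul_le_mul_of_nonneg_left h2 hp
      nlinarith
    have h0 : 0 ≤ sampleExp E p (fun A => Real.exp (-s * ∑ i ∈ A, x i)) := by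
      rw [← sE_const E p 0]
      exact sE_mono hp hp1 (fun A _ => (Real.exp_pos _).le)
    calc _ = (p * Real.exp (-s * x a) + (1 - p)) *
          sampleExp E p (fun A => Real.exp (-s * ∑ i ∈ A, x i)) := by ring
      _ ≤ Real.exp (-(1 - Real.exp (-s)) * (p * x a)) *
          Real.exp (-(1 - Real.exp (-s)) * (p * ∑ i ∈ E, x i)) :=
          mul_le_mul h3 ih h0 (Real.exp_pos _).le
      _ = _ := by rw [← Real.exp_add]; congr 1; ring

lemma tau_props (δ : ℝ) (h0 : 0 < δ) (h1 : δ ≤ 1) :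
    1 ≤ tau δ ∧ Real.log (tau δ) - tau δ + 1 ≤ Real.log δ := by
  have hL : 0 ≤ Real.log (1 / δ) := Real.log_nonneg (by rw [le_div_iff₀ h0]; linarith)
  have hl : Real.log (1 / δ) = - Real.log δ := by rw [one_div, Real.log_inv]
  set L := Real.log (1 / δ) with hLdef
  have hs := Real.sqrt_nonneg (L ^ 2 + 2 * L)
  have hs2 := Real.sq_sqrt (show 0 ≤ L ^ 2 + 2 * L by positivity)
  have ht : tau δ = 1 + L + Real.sqrt (L ^ 2 + 2 * L) := rfl
  have h1t : 1 ≤ tau δ := by rw [ht]; linarith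
  have heq : (tau δ - 1) ^ 2 = 2 * L * tau δ := by rw [ht]; nlinarith
  refine ⟨h1t, ?_⟩
  have hpos : 0 < tau δ := by linarith
  have hsinh : Real.log (tau δ) ≤ Real.sinh (Real.log (tau δ)) :=
    Real.self_le_sinh_iff.2 (Real.log_nonneg h1t)
  rw [Real.sinh_eq, Real.exp_neg, Real.exp_log hpos] at hsinh
  have : L = (tau δ - 1) ^ 2 / (2 * tau δ) := by rw [heq]; field_simp
  have h3 : (tau δ - (tau δ)⁻¹) / 2 - tau δ + 1 = - L := by rw [this]; field_simp; ring
  linarith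

lemma chernoff {ι : Type*} [DecidableEq ι] (E : Finset ι) (p : ℝ) (hp : 0 < p) (hp1 : p ≤ 1)
    (x : ι → ℝ) (hx : ∀ i, 0 ≤ x i) (hx1 : ∀ i, x i ≤ 1) (δ : ℝ) (h0 : 0 < δ) (h1 : δ ≤ 1)
    (hsum : tau δ / p ≤ ∑ i ∈ E, x i) :
    1 - δ ≤ sampleExp E p (fun A => if 1 ≤ ∑ i ∈ A, x i then 1 else 0) := by
  obtain ⟨h1t, hlog⟩ := tau_props δ h0 h1
  have hpos : 0 < tau δ := by linarith
  set s := Real.log (tau δ) with hs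
  have hs0 : 0 ≤ s := Real.log_nonneg h1t
  have hes : Real.exp (-s) = (tau δ)⁻¹ := by rw [Real.exp_neg, Real.exp_log hpos]
  have hA : sampleExp E p (fun A => 1 - Real.exp s * Real.exp (-s * ∑ i ∈ A, x i))
      ≤ sampleExp E p (fun A => if 1 ≤ ∑ i ∈ A, x i then 1 else 0) := by
    apply sE_mono hp.le hp1
    intro A _
    split_ifs with h
    · have : 0 ≤ Real.exp s * Real.exp (-s * ∑ i ∈ A, x i) := by positivity
      linarith
    · push Not at h
      rw [← Real.exp_add]
      have : 1 ≤ Real.exp (s + -s * ∑ i ∈ A, x i) := by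
        apply Real.one_le_exp
        nlinarith
      linarith
  rw [sE_sub, sE_const, sE_mul] at hA
  have hB := sE_exp E p hp.le hp1 x hx hx1 s
  have hC : tau δ ≤ p * ∑ i ∈ E, x i := by
    rw [div_le_iff₀ hp] at hsum; linarith
  have hD : Real.exp s * sampleExp E p (fun A => Real.exp (-s * ∑ i ∈ A, x i)) ≤ δ := by
    calc _ ≤ Real.exp s * Real.exp (-(1 - Real.exp (-s)) * (p * ∑ i ∈ E, x i)) :=
          mul_le_mul_of_nonneg_left hB (Real.exp_pos _).le
      _ = Real.exp (s + -(1 - Real.exp (-s)) * (p * ∑ i ∈ E, x i)) := by rw [Real.exp_add]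
      _ ≤ Real.exp (Real.log δ) := by
          apply Real.exp_le_exp.2
          have h5 : 0 ≤ 1 - Real.exp (-s) := by
            rw [hes]; linarith [inv_le_one_of_one_le₀ h1t]
          have h6 := mul_le_mul_of_nonneg_left hC h5
          have h7 : (1 - Real.exp (-s)) * tau δ = tau δ - 1 := by rw [hes]; field_simp
          linarith
      _ = δ := Real.exp_log h0
  linarith

/-- The version used: weights `w`, capacity `c`, list `L ⊆ Z`. -/
lemma chernoff_list {ι : Type*} [DecidableEq ι] (Z L : Finset ι) (hL : L ⊆ Z)
    (p : ℝ) (hp : 0 < p) (hp1 : p ≤ 1)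
    (w : ι → ℝ) (c : ℝ) (hc : 0 < c) (hw : ∀ i, 0 ≤ w i) (hw1 : ∀ i ∈ L, w i ≤ c)
    (δ : ℝ) (h0 : 0 < δ) (h1 : δ ≤ 1)
    (hsum : tau δ / p * c ≤ ∑ i ∈ L, w i) :
    1 - δ ≤ sampleExp Z p (fun B => if c ≤ ∑ i ∈ B ∩ L, w i then 1 else 0) := by
  have key := chernoff Z p hp hp1 (fun i => if i ∈ L then w i / c else 0)
    (fun i => by
      split_ifs
      · exact div_nonneg (hw i) hc.le
      · exact le_rfl)
    (fun i => by
      split_ifs with h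
      · rw [div_le_one hc]; exact hw1 i h
      · exact zero_le_one) δ h0 h1 (by
      rw [← Finset.sum_filter, Finset.filter_mem_eq_inter, Finset.inter_eq_right.2 hL,
        ← Finset.sum_div, le_div_iff₀ hc]
      exact hsum)
  refine key.trans (le_of_eq ?_)
  apply sE_congr
  intro B _
  rw [← Finset.sum_filter, Finset.filter_mem_eq_inter, ← Finset.sum_div]
  simp only [one_le_div hc]

lemma single_list {ι : Type*} [DecidableEq ι] (S : Finset ι) (g w : ι → ℝ) (θ c : ℝ)
    (hθ : 0 ≤ θ) (hc : 0 ≤ c) (hwc : ∀ i ∈ S, w i ≤ c) :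
    ∃ L ⊆ S, ∑ i ∈ L, w i ≤ θ + c ∧
      ∀ i ∈ S, i ∉ L → θ ≤ ∑ i ∈ L, w i ∧ ∀ i' ∈ L, g i' ≤ g i := by
  induction S using Finset.induction_on_max_value g with
  | empty => exact ⟨∅, by simp, by simp; linarith, by simp⟩
  | insert a S ha hmax ih =>
    obtain ⟨L, hLS, hLw, hL⟩ := ih (fun i hi => hwc i (Finset.mem_insert_of_mem hi))
    by_cases h : θ ≤ ∑ i ∈ L, w i
    · refine ⟨L, hLS.trans (Finset.subset_insert _ _), hLw, ?_⟩
      intro i hi hiL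
      rcases Finset.mem_insert.1 hi with rfl | hi
      · exact ⟨h, fun i' hi' => hmax i' (hLS hi')⟩
      · exact hL i hi hiL
    · have hSL : ∀ i ∈ S, i ∈ L := fun i hi => by
        by_contra hiL
        exact h (hL i hi hiL).1
      refine ⟨insert a L, Finset.insert_subset_insert _ hLS, ?_, ?_⟩
      · rw [Finset.sum_insert (fun h => ha (hLS h))]
        have := hwc a (Finset.mem_insert_self _ _)
        push Not at h
        linarith
      · intro i hi hiL
        exfalso
        rcases Finset.mem_insert.1 hi with rfl | hi
        · exact hiL (Finset.mem_insert_self _ _)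
        · exact hiL (Finset.mem_insert_of_mem (hSL i hi))

lemma list_family {ι Λ : Type*} [DecidableEq ι] [DecidableEq Λ] (E : Finset ι)
    (P : Λ → ι → Prop) (g w : Λ → ι → ℝ) (θ c : Λ → ℝ)
    (hθ : ∀ a, 0 ≤ θ a) (hc : ∀ a, 0 ≤ c a) (hwc : ∀ a i, P a i → w a i ≤ c a)
    (s : Finset Λ) :
    ∃ L : Λ → Finset ι, (∀ a ∈ s, L a ⊆ E ∧ (∀ i ∈ L a, P a i) ∧
        ∑ i ∈ L a, w a i ≤ θ a + c a) ∧
      (∀ a ∈ s, ∀ b ∈ s, a ≠ b → Disjoint (L a) (L b)) ∧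
      (∀ i ∈ E, (∀ a ∈ s, i ∉ L a) → ∀ a ∈ s, P a i →
        θ a ≤ ∑ i ∈ L a, w a i ∧ ∀ i' ∈ L a, g a i' ≤ g a i) := by
  classical
  induction s using Finset.induction_on with
  | empty => exact ⟨fun _ => ∅, by simp, by simp, by simp⟩
  | insert a s ha ih =>
    obtain ⟨L, h1, h2, h3⟩ := ih
    obtain ⟨N, hN, hNw, hNd⟩ := single_list ((E.filter (P a)) \ s.biUnion L) (g a) (w a) (θ a) (c a)
      (hθ a) (hc a) (fun i hi => hwc a i (by simp at hi; exact hi.1.2))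
    have hne : ∀ b ∈ s, b ≠ a := fun b hb h => ha (h ▸ hb)
    have hdis : ∀ b ∈ s, Disjoint N (L b) := by
      intro b hb
      rw [Finset.disjoint_left]
      intro i hi hib
      have := hN hi
      simp only [Finset.mem_sdiff, Finset.mem_biUnion, not_exists, not_and] at this
      exact this.2 b hb hib
    refine ⟨Function.update L a N, ?_, ?_, ?_⟩
    · intro b hb
      rcases Finset.mem_insert.1 hb with rfl | hb
      · simp only [Function.update_self]
        refine ⟨fun i hi => ?_, fun i hi => ?_, hNw⟩
        · have := hN hi; simp at this; exact this.1.1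
        · have := hN hi; simp at this; exact this.1.2
      · rw [Function.update_of_ne (hne b hb)]; exact h1 b hb
    · intro b hb b' hb' hbb
      rcases Finset.mem_insert.1 hb with rfl | hc1 <;> rcases Finset.mem_insert.1 hb' with rfl | hc2
      · exact absurd rfl hbb
      · rw [Function.update_self, Function.update_of_ne (hne b' hc2)]; exact hdis b' hc2
      · rw [Function.update_self, Function.update_of_ne (hne b hc1)]; exact (hdis b hc1).symm
      · rw [Function.update_of_ne (hne b hc1), Function.update_of_ne (hne b' hc2)]
        exact h2 b hc1 b' hc2 hbb
    · intro i hi hnot b hb hP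
      have hnots : ∀ a ∈ s, i ∉ L a := fun a' ha' => by
        have := hnot a' (Finset.mem_insert_of_mem ha')
        rwa [Function.update_of_ne (hne a' ha')] at this
      rcases Finset.mem_insert.1 hb with rfl | hb
      · simp only [Function.update_self]
        apply hNd i
        · simp only [Finset.mem_sdiff, Finset.mem_filter, Finset.mem_biUnion, not_exists, not_and]
          exact ⟨⟨hi, hP⟩, hnots⟩
        · have := hnot b (Finset.mem_insert_self _ _)
          rwa [Function.update_self] at this
      · rw [Function.update_of_ne (hne b hb)]
        exact h3 i hi hnots b hb hP

lemma cross_sum {ι : Type*} (D N : Finset ι) (a b c d : ι → ℝ)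
    (h : ∀ i ∈ D, ∀ i' ∈ N, a i' * b i ≤ c i * d i') :
    (∑ i ∈ N, a i) * (∑ i ∈ D, b i) ≤ (∑ i ∈ D, c i) * (∑ i ∈ N, d i) := by
  rw [Finset.sum_mul_sum, Finset.sum_mul_sum, Finset.sum_comm]
  exact Finset.sum_le_sum fun i hi => Finset.sum_le_sum fun i' hi' => h i hi i' hi'

lemma mid_replace {ι : Type*} [DecidableEq ι] (D N0 : Finset ι) (v w : ι → ℝ) (c δ : ℝ)
    (hc : 0 < c) (hDw : ∑ i ∈ D, w i ≤ c) (hN0 : c ≤ ∑ i ∈ N0, w i)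
    (hw : ∀ i ∈ D, ∀ i' ∈ N0, w i' ≤ w i)
    (hv : ∀ i ∈ D, ∀ i' ∈ N0, v i ≤ (1 + δ) * v i') :
    ∃ N ⊆ N0, ∑ i ∈ N, w i ≤ ∑ i ∈ D, w i ∧ ∑ i ∈ D, v i ≤ (1 + δ) * ∑ i ∈ N, v i := by
  have hcard : D.card ≤ N0.card := by
    have h := cross_sum D N0 w (fun _ => 1) w (fun _ => 1)
      (fun i hi i' hi' => by simpa using hw i hi i' hi')
    simp only [Finset.sum_const, nsmul_eq_mul, mul_one] at h
    have h2 : (∑ i ∈ D, w i) * (N0.card : ℝ) ≤ (∑ i ∈ N0, w i) * N0.card :=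
      mul_le_mul_of_nonneg_right (hDw.trans hN0) (Nat.cast_nonneg _)
    have h3 := le_of_mul_le_mul_left (h.trans h2) (hc.trans_le hN0)
    exact_mod_cast h3
  obtain ⟨N, hN, hNc⟩ := Finset.exists_subset_card_eq hcard
  rcases Finset.eq_empty_or_nonempty D with rfl | hne
  · exact ⟨∅, by simp, by simp, by simp⟩
  have hpos : (0:ℝ) < D.card := by exact_mod_cast hne.card_pos
  refine ⟨N, hN, ?_, ?_⟩
  · have h := cross_sum D N w (fun _ => 1) w (fun _ => 1)
      (fun i hi i' hi' => by simpa using hw i hi i' (hN hi'))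
    simp only [Finset.sum_const, nsmul_eq_mul, mul_one, hNc] at h
    exact le_of_mul_le_mul_right h hpos
  · have h := cross_sum N D v (fun _ => 1) (fun i => (1 + δ) * v i) (fun _ => 1)
      (fun i hi i' hi' => by simpa using hv i' hi' i (hN hi))
    simp only [Finset.sum_const, nsmul_eq_mul, mul_one, hNc, ← Finset.mul_sum] at h
    exact le_of_mul_le_mul_right h hpos

lemma small_replace {ι : Type*} [DecidableEq ι] (D N0 : Finset ι) (v w : ι → ℝ) (c s : ℝ)
    (hs : 0 ≤ s) (hwn : ∀ i, 0 ≤ w i)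
    (hc : 0 < c) (hDw : ∑ i ∈ D, w i ≤ c) (hN0 : c ≤ ∑ i ∈ N0, w i)
    (hvD : ∀ i ∈ D, 0 < v i) (hvs : ∀ i ∈ N0, v i ≤ s)
    (hk : ∀ i ∈ D, ∀ i' ∈ N0, w i' * v i ≤ w i * v i') :
    ∃ N ⊆ N0, ∑ i ∈ N, w i ≤ ∑ i ∈ D, w i ∧ ∑ i ∈ D, v i - s ≤ ∑ i ∈ N, v i := by
  rcases Finset.eq_empty_or_nonempty D with rfl | hne
  · exact ⟨∅, by simp, by simp, by simp [hs]⟩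
  have hWD : 0 < ∑ i ∈ D, w i := by
    obtain ⟨i, hi⟩ := hne
    rcases (hwn i).lt_or_eq with h | h
    · exact Finset.sum_pos' (fun i _ => hwn i) ⟨i, hi, h⟩
    · exfalso
      have : ∑ i ∈ N0, w i ≤ 0 := by
        apply Finset.sum_nonpos
        intro i' hi'
        have h1 := hk i hi i' hi'
        rw [← h, zero_mul] at h1
        by_contra h2
        push Not at h2
        have := mul_pos h2 (hvD i hi)
        linarith
      linarith
  have main : ∀ N ⊆ N0, ∑ i ∈ D, w i ≤ ∑ i ∈ N, w i → ∑ i ∈ D, v i ≤ ∑ i ∈ N, v i := by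
    intro N hN hle
    have h := cross_sum D N w v w v (fun i hi i' hi' => hk i hi i' (hN hi'))
    have h2 : (∑ i ∈ D, w i) * ∑ i ∈ D, v i ≤ (∑ i ∈ N, w i) * ∑ i ∈ D, v i :=
      mul_le_mul_of_nonneg_right hle (Finset.sum_nonneg fun i hi => (hvD i hi).le)
    exact le_of_mul_le_mul_left (h2.trans h) hWD
  obtain ⟨N, hNmem, hNmax⟩ := Finset.exists_max_image
    (N0.powerset.filter (fun N => ∑ i ∈ N, w i ≤ ∑ i ∈ D, w i)) Finset.card
    ⟨∅, by simp [hWD.le]⟩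
  rw [Finset.mem_filter, Finset.mem_powerset] at hNmem
  obtain ⟨hN, hNw⟩ := hNmem
  refine ⟨N, hN, hNw, ?_⟩
  by_cases hEq : N = N0
  · have := main N hN (by rw [hEq]; linarith)
    linarith
  · obtain ⟨x, hx, hxN⟩ := Finset.exists_of_ssubset (Finset.ssubset_iff_subset_ne.2 ⟨hN, hEq⟩)
    have hsub : insert x N ⊆ N0 := Finset.insert_subset hx hN
    have hgt : ∑ i ∈ D, w i ≤ ∑ i ∈ insert x N, w i := by
      by_contra hlt
      push Not at hlt
      have := hNmax (insert x N) (by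
        rw [Finset.mem_filter, Finset.mem_powerset]; exact ⟨hsub, hlt.le⟩)
      rw [Finset.card_insert_of_notMem hxN] at this
      omega
    have := main _ hsub hgt
    rw [Finset.sum_insert hxN] at this
    linarith [hvs x hx]

/-- next-fit bin packing -/
lemma bin_pack {ι : Type*} [DecidableEq ι] (S : Finset ι) (w : ι → ℝ) (c : ℝ) (hc : 0 ≤ c)
    (hw0 : ∀ i, 0 ≤ w i) (hwc : ∀ i ∈ S, w i ≤ c) :
    ∃ (n : ℕ) (f : ι → ℕ), (∀ i, f i ≤ n) ∧ (∀ b, ∑ i ∈ S with f i = b, w i ≤ c) ∧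
      n * c + ∑ i ∈ S with f i = n, w i ≤ 2 * ∑ i ∈ S, w i := by
  induction S using Finset.induction_on with
  | empty => exact ⟨0, fun _ => 0, by simp, by simp [hc], by simp⟩
  | insert a S ha ih =>
    obtain ⟨n, f, hf, hb, hn⟩ := ih (fun i hi => hwc i (Finset.mem_insert_of_mem hi))
    have hac := hwc a (Finset.mem_insert_self _ _)
    have upd : ∀ k b, ∑ i ∈ insert a S with Function.update f a k i = b, w i
        = (if k = b then w a else 0) + ∑ i ∈ S with f i = b, w i := by
      intro k b
      rw [Finset.sum_filter, Finset.sum_insert ha, Finset.sum_filter, Function.update_self]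
      congr 1
      apply Finset.sum_congr rfl
      intro i hi
      have hia : i ≠ a := by
        rintro rfl
        exact ha hi
      rw [Function.update_of_ne hia]
    by_cases h : w a + ∑ i ∈ S with f i = n, w i ≤ c
    · refine ⟨n, Function.update f a n, ?_, ?_, ?_⟩
      · intro i
        by_cases hi : i = a
        · rw [hi, Function.update_self]
        · rw [Function.update_of_ne hi]; exact hf i
      · intro b
        rw [upd]
        split_ifs with hnb
        · rw [← hnb]; exact h
        · rw [zero_add]; exact hb b
      · rw [upd, if_pos rfl, Finset.sum_insert ha]
        linarith [hw0 a]
    · push Not at h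
      have hempty : ∑ i ∈ S with f i = n + 1, w i = 0 := by
        rw [Finset.filter_false_of_mem, Finset.sum_empty]
        intro i _ h2
        have := hf i
        omega
      refine ⟨n + 1, Function.update f a (n + 1), ?_, ?_, ?_⟩
      · intro i
        by_cases hi : i = a
        · rw [hi, Function.update_self]
        · rw [Function.update_of_ne hi]; exact (hf i).trans (Nat.le_succ n)
      · intro b
        rw [upd]
        split_ifs with hnb
        · rw [← hnb, hempty]; linarith
        · rw [zero_add]; exact hb b
      · rw [upd, if_pos rfl, Finset.sum_insert ha, hempty]
        push_cast
        linarith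

lemma exists_sigma {ι : Type*} {m : ℕ} (S : Fin m → Finset ι)
    (hS : ∀ j j', j ≠ j' → Disjoint (S j) (S j')) :
    ∃ σ : ι → Option (Fin m), ∀ i j, σ i = some j ↔ i ∈ S j := by
  classical
  refine ⟨fun i => if h : ∃ j, i ∈ S j then some h.choose else none, ?_⟩
  intro i j
  beta_reduce
  constructor
  · intro h
    by_cases hi : ∃ j, i ∈ S j
    · rw [dif_pos hi] at h
      have := hi.choose_spec
      rwa [Option.some.inj h] at this
    · rw [dif_neg hi] at h
      exact absurd h (by simp)
  · intro h
    have hi : ∃ j, i ∈ S j := ⟨j, h⟩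
    rw [dif_pos hi]
    congr 1
    by_contra hne
    exact Finset.disjoint_left.1 (hS _ _ hne) hi.choose_spec h

lemma gap_finite {ι : Type*} [DecidableEq ι] {m : ℕ} (A : Finset ι) :
    {σ : ι → Option (Fin m) | ∀ i, σ i ≠ none → i ∈ A}.Finite := by
  apply Set.Finite.subset (Set.finite_range
    (fun (s : A → Option (Fin m)) (i : ι) => if h : i ∈ A then s ⟨i, h⟩ else none))
  intro σ hσ
  refine ⟨fun i => σ i, ?_⟩
  funext i
  dsimp only
  split_ifs with h
  · rfl
  · by_contra hn
    exact h (hσ i (fun h' => hn h'.symm))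

lemma gap_set_finite {ι : Type*} [DecidableEq ι] {m : ℕ} (E : Finset ι)
    (C : Fin m → ℝ) (v w : ι → Fin m → ℝ) (A : Finset ι) :
    {x : ℝ | ∃ σ : ι → Option (Fin m), (∀ i, σ i ≠ none → i ∈ A) ∧
    (∀ j, knapWeight E w σ j ≤ C j) ∧ x = assignValue E v σ}.Finite := by
  apply Set.Finite.subset ((gap_finite (m := m) A).image (assignValue E v))
  rintro x ⟨σ, h1, _, rfl⟩
  exact ⟨σ, h1, rfl⟩

lemma gap_attained {ι : Type*} [DecidableEq ι] {m : ℕ} (E : Finset ι)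
    (C : Fin m → ℝ) (hC : ∀ j, 0 < C j) (v w : ι → Fin m → ℝ) (A : Finset ι) :
    ∃ σ : ι → Option (Fin m), (∀ i, σ i ≠ none → i ∈ A) ∧
    (∀ j, knapWeight E w σ j ≤ C j) ∧ gapOPT E C v w A = assignValue E v σ := by
  have := Set.Nonempty.csSup_mem (s := {x : ℝ | ∃ σ : ι → Option (Fin m), (∀ i, σ i ≠ none → i ∈ A) ∧
    (∀ j, knapWeight E w σ j ≤ C j) ∧ x = assignValue E v σ})
    ⟨0, fun _ => none, by simp, fun j => by simp [knapWeight, (hC j).le], by simp [assignValue]⟩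
    (gap_set_finite E C v w A)
  exact this

lemma gap_ge {ι : Type*} [DecidableEq ι] {m : ℕ} (E : Finset ι)
    (C : Fin m → ℝ) (v w : ι → Fin m → ℝ) (A : Finset ι)
    (σ : ι → Option (Fin m)) (h1 : ∀ i, σ i ≠ none → i ∈ A)
    (h2 : ∀ j, knapWeight E w σ j ≤ C j) : assignValue E v σ ≤ gapOPT E C v w A :=
  le_csSup (gap_set_finite E C v w A).bddAbove ⟨σ, h1, h2, rfl⟩

lemma value_split {ι : Type*} {m : ℕ} (X : Finset ι)
    (v : ι → Fin m → ℝ) (σ : ι → Option (Fin m)) :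
    ∑ i ∈ X, (σ i).elim 0 (v i) = ∑ j, ∑ i ∈ X with σ i = some j, v i j := by
  simp only [Finset.sum_filter]
  rw [Finset.sum_comm]
  apply Finset.sum_congr rfl
  intro i _
  cases h : σ i with
  | none => simp
  | some k => simp

lemma gap_ge_family {ι : Type*} [DecidableEq ι] {m : ℕ} (E : Finset ι)
    (C : Fin m → ℝ) (v w : ι → Fin m → ℝ) (A : Finset ι) (hA : A ⊆ E)
    (S : Fin m → Finset ι) (hS : ∀ j j', j ≠ j' → Disjoint (S j) (S j'))
    (hSA : ∀ j, S j ⊆ A) (hSw : ∀ j, ∑ i ∈ S j, w i j ≤ C j) :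
    ∑ j, ∑ i ∈ S j, v i j ≤ gapOPT E C v w A := by
  obtain ⟨σ, hσ⟩ := exists_sigma S hS
  have hfil : ∀ j, E.filter (fun i => σ i = some j) = S j := by
    intro j
    ext i
    simp only [Finset.mem_filter, hσ]
    exact ⟨fun h => h.2, fun h => ⟨hA (hSA j h), h⟩⟩
  have := gap_ge E C v w A σ (by
    intro i hi
    obtain ⟨j, hj⟩ := Option.ne_none_iff_exists'.1 hi
    exact hSA j ((hσ i j).1 hj)) (by
    intro j
    unfold knapWeight
    rw [← Finset.sum_filter, hfil]
    exact hSw j)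
  unfold assignValue at this
  rw [value_split] at this
  simpa only [hfil] using this

lemma degree_lemma {ι : Type*} [DecidableEq ι] {m : ℕ} (E : Finset ι)
    (C : Fin m → ℝ) (hC : ∀ j, 0 < C j) (w : ι → Fin m → ℝ) (hw : ∀ i j, 0 ≤ w i j)
    (S : Fin m → Finset ι) (hS : ∀ j j', j ≠ j' → Disjoint (S j) (S j'))
    (hSE : ∀ j, S j ⊆ E) (hSc : ∀ j, ∀ i ∈ S j, w i j ≤ C j)
    (Y X : ℝ) (hY : 0 ≤ Y) (hXY : Y + 1 ≤ X)
    (hSw : ∀ j, 2 * ∑ i ∈ S j, w i j ≤ Y * C j) :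
    (fun i => (1 / X) * (if i ∈ Finset.univ.biUnion S then (1 : ℝ) else 0)) ∈
        convexHull ℝ {x : ι → ℝ | ∃ S : Finset ι, S ⊆ E ∧
          (∃ σ : ι → Option (Fin m), (∀ i, σ i ≠ none ↔ i ∈ S) ∧
            (∀ j, knapWeight E w σ j ≤ C j)) ∧
          x = fun i => if i ∈ S then (1 : ℝ) else 0} := by
  set H := {x : ι → ℝ | ∃ S : Finset ι, S ⊆ E ∧
          (∃ σ : ι → Option (Fin m), (∀ i, σ i ≠ none ↔ i ∈ S) ∧
            (∀ j, knapWeight E w σ j ≤ C j)) ∧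
          x = fun i => if i ∈ S then (1 : ℝ) else 0} with hH
  choose n f hfn hfb hn using fun j => bin_pack (S j) (fun i => w i j) (C j) (hC j).le
    (fun i => hw i j) (hSc j)
  set B := ⌊X⌋₊ with hB
  have hX0 : 0 < X := by linarith
  have hB1 : 1 ≤ B := Nat.le_floor (by push_cast; linarith)
  have hBX : (B : ℝ) ≤ X := Nat.floor_le hX0.le
  have hnB : ∀ j, n j < B := by
    intro j
    have h1 : (0:ℝ) ≤ ∑ i ∈ S j with f j i = n j, w i j := Finset.sum_nonneg fun i _ => hw i j
    have h2 : (n j : ℝ) * C j ≤ Y * C j := by linarith [hn j, hSw j]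
    have h3 : (n j : ℝ) ≤ Y := le_of_mul_le_mul_right h2 (hC j)
    have : n j + 1 ≤ B := Nat.le_floor (by push_cast; linarith)
    omega
  have hzero : (0 : ι → ℝ) ∈ convexHull ℝ H := by
    apply subset_convexHull
    exact ⟨∅, by simp, ⟨fun _ => none, by simp, fun j => by simp [knapWeight, (hC j).le]⟩,
      by funext i; simp⟩
  let T : ℕ → Fin m → Finset ι := fun b j => (S j).filter (fun i => f j i = b)
  have hTd : ∀ b j j', j ≠ j' → Disjoint (T b j) (T b j') := fun b j j' h =>
    Finset.disjoint_of_subset_left (Finset.filter_subset _ _)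
      (Finset.disjoint_of_subset_right (Finset.filter_subset _ _) (hS j j' h))
  have hmem : ∀ b, (fun i => if i ∈ Finset.univ.biUnion (T b) then (1:ℝ) else 0)
      ∈ convexHull ℝ H := by
    intro b
    apply subset_convexHull
    obtain ⟨σ, hσ⟩ := exists_sigma (T b) (hTd b)
    refine ⟨Finset.univ.biUnion (T b), ?_, ⟨σ, ?_, ?_⟩, rfl⟩
    · intro i hi
      obtain ⟨j, _, hj⟩ := Finset.mem_biUnion.1 hi
      exact hSE j (Finset.mem_filter.1 hj).1
    · intro i
      rw [Option.ne_none_iff_exists']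
      simp [hσ]
    · intro j
      unfold knapWeight
      rw [← Finset.sum_filter]
      refine le_trans (Finset.sum_le_sum_of_subset_of_nonneg ?_ (fun i _ _ => hw i j)) (hfb j b)
      intro i hi
      rw [Finset.mem_filter, hσ] at hi
      exact hi.2
  have havg := (convex_convexHull ℝ H).sum_mem (t := Finset.range B)
    (w := fun _ => (1 / (B:ℝ)))
    (z := fun b => (fun i => if i ∈ Finset.univ.biUnion (T b) then (1:ℝ) else 0))
    (fun _ _ => by positivity)
    (by
      have : (B : ℝ) ≠ 0 := by positivity
      simp [this])
    (fun b _ => hmem b)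
  have hfin := (convex_convexHull ℝ H).smul_mem_of_zero_mem hzero havg
    (t := B / X) ⟨by positivity, by rw [div_le_one hX0]; exact hBX⟩
  convert hfin using 1
  funext i
  simp only [Pi.smul_apply, Finset.sum_apply, smul_eq_mul, ← Finset.mul_sum]
  have hcount : ∑ b ∈ Finset.range B, (if i ∈ Finset.univ.biUnion (T b) then (1:ℝ) else 0)
      = if i ∈ Finset.univ.biUnion S then (1:ℝ) else 0 := by
    by_cases hi : i ∈ Finset.univ.biUnion S
    · rw [if_pos hi]
      obtain ⟨j, _, hj⟩ := Finset.mem_biUnion.1 hi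
      have hiff : ∀ b, i ∈ Finset.univ.biUnion (T b) ↔ b = f j i := by
        intro b
        rw [Finset.mem_biUnion]
        constructor
        · rintro ⟨j', _, h⟩
          obtain ⟨h1, h2⟩ := Finset.mem_filter.1 h
          have : j' = j := by
            by_contra hne
            exact Finset.disjoint_left.1 (hS j' j hne) h1 hj
          rw [← this, h2]
        · rintro rfl
          exact ⟨j, Finset.mem_univ _, Finset.mem_filter.2 ⟨hj, rfl⟩⟩
      simp only [hiff]
      rw [Finset.sum_ite_eq', if_pos]
      exact Finset.mem_range.2 ((hfn j i).trans_lt (hnB j))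
    · rw [if_neg hi]
      apply Finset.sum_eq_zero
      intro b _
      rw [if_neg]
      intro h
      obtain ⟨j, hj1, hj⟩ := Finset.mem_biUnion.1 h
      exact hi (Finset.mem_biUnion.2 ⟨j, hj1, (Finset.mem_filter.1 hj).1⟩)
  rw [hcount]
  have : (B : ℝ) ≠ 0 := by positivity
  field_simp

lemma core {ι : Type*} [DecidableEq ι] {m M : ℕ} (E : Finset ι)
    (C : Fin m → ℝ) (hC : ∀ j, 0 < C j)
    (v w : ι → Fin m → ℝ) (hv : ∀ i j, 0 ≤ v i j) (hw : ∀ i j, 0 ≤ w i j)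
    (p : ℝ) (hp : 0 < p) (hp1 : p ≤ 1) (δ : ℝ) (hδ : 0 < δ) (hδ1 : δ < 1 / 2)
    (Q Z : Finset ι) (hZQ : Z ⊆ Q) (hQE : Q ⊆ E)
    (L : Fin m → Fin M → Finset ι) (hLZ : ∀ j k, L j k ⊆ Z)
    (hLd : ∀ j k j' k', (j, k) ≠ (j', k') → Disjoint (L j k) (L j' k'))
    (hLc : ∀ j k, ∀ i ∈ L j k, w i j ≤ C j)
    (β : Fin m → ι → Fin M) (last : Fin M) (J : Finset (Fin m))
    (V : Fin m → ℝ) (hV0 : ∀ j, 0 ≤ V j) (loss : Fin m → Fin M → ℝ) (hloss0 : ∀ j k, 0 ≤ loss j k)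
    (ε : ℝ) (hloss : ∀ j, ∑ k, loss j k ≤ ε * V j)
    (hJ : ∀ j ∈ J, tau δ / p * C j ≤ ∑ i ∈ L j last, w i j)
    (hJv : ∀ j ∈ J, ∀ i ∈ L j last, V j ≤ (1 - δ) * v i j)
    (hfull : ∀ j, ∀ i ∈ E, i ∉ Q → 0 < v i j → w i j ≤ C j →
      tau δ / p * C j ≤ ∑ i' ∈ L j (β j i), w i' j)
    (hrep : ∀ j, j ∉ J → ∀ k, ∀ D : Finset ι,
      (∀ i ∈ D, i ∈ E ∧ i ∉ Q ∧ 0 < v i j ∧ w i j ≤ C j ∧ β j i = k) →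
      ∑ i ∈ D, w i j ≤ C j → ∀ N0, N0 ⊆ L j k → C j ≤ ∑ i ∈ N0, w i j →
      ∃ N ⊆ N0, ∑ i ∈ N, w i j ≤ ∑ i ∈ D, w i j ∧
        (1 - δ) * ∑ i ∈ D, v i j - loss j k ≤ ∑ i ∈ N, v i j)
    (A : Finset ι) (hAZ : Disjoint A Z)
    (ρ : ι → Option (Fin m)) (hρA : ∀ i, ρ i ≠ none → i ∈ A)
    (hρ : ∀ j, knapWeight E w ρ j ≤ C j) :
    ∑ j, (if j ∈ J then V j else
        (1 - 2 * δ) * (∑ i ∈ E with ρ i = some j, v i j) - ε * V j)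
      ≤ sampleExp Z p (fun B => gapOPT E C v w (Q ∩ (A ∪ B))) := by
  classical
  let D : Fin m → Fin M → Finset ι := fun j k =>
    (((E \ Q).filter (fun i => ρ i = some j)).filter (fun i => 0 < v i j)).filter (fun i => β j i = k)
  let keep : Fin m → Finset ι := fun j => Q.filter (fun i => ρ i = some j)
  have hsplit : ∀ j (u : ι → ℝ), ∑ i ∈ E with ρ i = some j, u i
      = ∑ i ∈ keep j, u i + ∑ i ∈ E \ Q with ρ i = some j, u i := by
    intro j u
    rw [← Finset.sum_union]
    · apply Finset.sum_congr _ (fun _ _ => rfl)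
      ext i
      simp only [keep, Finset.mem_filter, Finset.mem_union, Finset.mem_sdiff]
      constructor
      · rintro ⟨h1, h2⟩
        by_cases hq : i ∈ Q
        · exact Or.inl ⟨hq, h2⟩
        · exact Or.inr ⟨⟨h1, hq⟩, h2⟩
      · rintro (⟨h1, h2⟩ | ⟨h1, h2⟩)
        · exact ⟨hQE h1, h2⟩
        · exact ⟨h1.1, h2⟩
    · rw [Finset.disjoint_left]
      intro i h1 h2
      simp only [keep, Finset.mem_filter, Finset.mem_sdiff] at h1 h2
      exact h2.1.2 h1.1
  have hDsum : ∀ j (u : ι → ℝ), ∑ k, ∑ i ∈ D j k, u i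
      = ∑ i ∈ ((E \ Q).filter (fun i => ρ i = some j)).filter (fun i => 0 < v i j), u i := by
    intro j u
    exact Finset.sum_fiberwise _ _ _
  have hwρ : ∀ j, ∑ i ∈ E with ρ i = some j, w i j ≤ C j := by
    intro j
    have := hρ j
    unfold knapWeight at this
    rwa [← Finset.sum_filter] at this
  have hwtot : ∀ j, ∑ i ∈ keep j, w i j + ∑ k, ∑ i ∈ D j k, w i j ≤ C j := by
    intro j
    refine le_trans ?_ (hwρ j)
    rw [hsplit, hDsum]
    have := Finset.sum_le_sum_of_subset_of_nonneg (f := fun i => w i j)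
      (Finset.filter_subset (fun i => 0 < v i j) ((E \ Q).filter (fun i => ρ i = some j)))
      (fun i _ _ => hw i j)
    linarith
  have hvtot : ∀ j, ∑ i ∈ E with ρ i = some j, v i j
      = ∑ i ∈ keep j, v i j + ∑ k, ∑ i ∈ D j k, v i j := by
    intro j
    rw [hsplit, hDsum]
    congr 1
    symm
    apply Finset.sum_filter_of_ne
    intro i _ h
    exact lt_of_le_of_ne (hv i j) (Ne.symm h)
  have hDmem : ∀ j k, ∀ i ∈ D j k, i ∈ E ∧ i ∉ Q ∧ 0 < v i j ∧ w i j ≤ C j ∧ β j i = k := by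
    intro j k i hi
    simp only [D, Finset.mem_filter, Finset.mem_sdiff] at hi
    obtain ⟨⟨⟨⟨h1, h2⟩, h3⟩, h4⟩, h5⟩ := hi
    refine ⟨h1, h2, h4, ?_, h5⟩
    refine le_trans ?_ (hwρ j)
    exact Finset.single_le_sum (f := fun i => w i j) (fun i _ => hw i j)
      (Finset.mem_filter.2 ⟨h1, h3⟩)
  have hDw : ∀ j k, ∑ i ∈ D j k, w i j ≤ C j := by
    intro j k
    have h1 := Finset.single_le_sum (f := fun k => ∑ i ∈ D j k, w i j)
      (fun k _ => Finset.sum_nonneg fun i _ => hw i j) (Finset.mem_univ k)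
    have h2 : 0 ≤ ∑ i ∈ keep j, w i j := Finset.sum_nonneg fun i _ => hw i j
    have := hwtot j
    linarith
  let G : Finset ι → Fin m → Fin M → ℝ := fun B j k =>
    if C j ≤ ∑ i ∈ B ∩ L j k, w i j then 1 else 0
  let h : Fin m → Finset ι → ℝ := fun j B =>
    if j ∈ J then (V j / (1 - δ)) * G B j last
    else ∑ i ∈ keep j, v i j + ∑ k, (((1 - δ) * ∑ i ∈ D j k, v i j) * G B j k - loss j k)
  have hδ' : 0 < 1 - δ := by linarith
  have claim1 : ∀ B, B ⊆ Z → ∀ j, ∃ S : Finset ι, S ⊆ Q ∩ (A ∪ B) ∧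
      (∀ i ∈ S, (i ∈ A ∧ ρ i = some j) ∨ ∃ k, i ∈ L j k) ∧ ∑ i ∈ S, w i j ≤ C j ∧
      h j B ≤ ∑ i ∈ S, v i j := by
    intro B hB j
    by_cases hj : j ∈ J
    · by_cases hG : C j ≤ ∑ i ∈ B ∩ L j last, w i j
      · have hne : (B ∩ L j last).Nonempty := by
          rw [Finset.nonempty_iff_ne_empty]
          intro he
          rw [he, Finset.sum_empty] at hG
          linarith [hC j]
        obtain ⟨i, hi⟩ := hne
        obtain ⟨hiB, hiL⟩ := Finset.mem_inter.1 hi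
        refine ⟨{i}, ?_, ?_, ?_, ?_⟩
        · rw [Finset.singleton_subset_iff]
          exact Finset.mem_inter.2 ⟨hZQ (hB hiB), Finset.mem_union_right _ hiB⟩
        · intro i' hi'
          rw [Finset.mem_singleton] at hi'
          subst hi'
          exact Or.inr ⟨last, hiL⟩
        · rw [Finset.sum_singleton]; exact hLc j last i hiL
        · rw [Finset.sum_singleton]
          simp only [h, G, if_pos hj, if_pos hG, mul_one]
          rw [div_le_iff₀ hδ']
          linarith [hJv j hj i hiL]
      · refine ⟨∅, by simp, by simp, by simp [(hC j).le], ?_⟩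
        simp only [h, G, if_pos hj, if_neg hG, mul_zero, Finset.sum_empty, le_refl]
    · have hN : ∀ k, ∃ N ⊆ B ∩ L j k, ∑ i ∈ N, w i j ≤ ∑ i ∈ D j k, w i j ∧
          ((1 - δ) * ∑ i ∈ D j k, v i j) * G B j k - loss j k ≤ ∑ i ∈ N, v i j := by
        intro k
        by_cases hG : C j ≤ ∑ i ∈ B ∩ L j k, w i j
        · obtain ⟨N, h1, h2, h3⟩ := hrep j hj k (D j k) (hDmem j k) (hDw j k) (B ∩ L j k)
            Finset.inter_subset_right hG
          refine ⟨N, h1, h2, ?_⟩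
          simp only [G, if_pos hG, mul_one]
          exact h3
        · refine ⟨∅, by simp, ?_, ?_⟩
          · rw [Finset.sum_empty]
            exact Finset.sum_nonneg fun i _ => hw i j
          · simp only [G, if_neg hG, mul_zero, Finset.sum_empty]
            linarith [hloss0 j k]
      choose N hNs hNw hNv using hN
      have hNd : Set.PairwiseDisjoint (↑(Finset.univ : Finset (Fin M))) N := by
        intro k _ k' _ hkk
        have := hLd j k j k' (by simpa using hkk)
        exact Finset.disjoint_of_subset_left ((hNs k).trans Finset.inter_subset_right)
          (Finset.disjoint_of_subset_right ((hNs k').trans Finset.inter_subset_right) this)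
      have hkA : ∀ i ∈ keep j, i ∈ A ∧ ρ i = some j ∧ i ∈ Q := by
        intro i hi
        obtain ⟨h1, h2⟩ := Finset.mem_filter.1 hi
        exact ⟨hρA i (by simp [h2]), h2, h1⟩
      have hkd : Disjoint (keep j) (Finset.univ.biUnion N) := by
        rw [Finset.disjoint_left]
        intro i h1 h2
        obtain ⟨k, _, hk⟩ := Finset.mem_biUnion.1 h2
        exact Finset.disjoint_left.1 hAZ (hkA i h1).1
          (hLZ j k (Finset.mem_inter.1 (hNs k hk)).2)
      refine ⟨keep j ∪ Finset.univ.biUnion N, ?_, ?_, ?_, ?_⟩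
      · intro i hi
        rcases Finset.mem_union.1 hi with h1 | h1
        · exact Finset.mem_inter.2 ⟨(hkA i h1).2.2, Finset.mem_union_left _ (hkA i h1).1⟩
        · obtain ⟨k, _, hk⟩ := Finset.mem_biUnion.1 h1
          have hiB := (Finset.mem_inter.1 (hNs k hk)).1
          exact Finset.mem_inter.2 ⟨hZQ (hB hiB), Finset.mem_union_right _ hiB⟩
      · intro i hi
        rcases Finset.mem_union.1 hi with h1 | h1
        · exact Or.inl ⟨(hkA i h1).1, (hkA i h1).2.1⟩
        · obtain ⟨k, _, hk⟩ := Finset.mem_biUnion.1 h1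
          exact Or.inr ⟨k, (Finset.mem_inter.1 (hNs k hk)).2⟩
      · rw [Finset.sum_union hkd, Finset.sum_biUnion hNd]
        have := Finset.sum_le_sum (fun k (_ : k ∈ Finset.univ) => hNw k)
        linarith [hwtot j]
      · rw [Finset.sum_union hkd, Finset.sum_biUnion hNd]
        have := Finset.sum_le_sum (fun k (_ : k ∈ Finset.univ) => hNv k)
        simp only [h, if_neg hj]
        linarith
  have claim2 : ∀ j, (if j ∈ J then V j else
        (1 - 2 * δ) * (∑ i ∈ E with ρ i = some j, v i j) - ε * V j) ≤ sampleExp Z p (h j) := by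
    intro j
    have hpr : ∀ k, tau δ / p * C j ≤ ∑ i ∈ L j k, w i j →
        1 - δ ≤ sampleExp Z p (fun B => G B j k) := fun k hk =>
      chernoff_list Z (L j k) (hLZ j k) p hp hp1 (fun i => w i j) (C j) (hC j)
        (fun i => hw i j) (hLc j k) δ hδ (by linarith) hk
    by_cases hj : j ∈ J
    · simp only [h, if_pos hj]
      rw [sE_mul]
      have h1 := hpr last (hJ j hj)
      have h2 := mul_le_mul_of_nonneg_left h1 (div_nonneg (hV0 j) hδ'.le)
      rwa [div_mul_cancel₀ _ hδ'.ne'] at h2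
    · simp only [h, if_neg hj]
      rw [sE_add, sE_const, sE_sum]
      have hk : ∀ k, (1 - 2 * δ) * ∑ i ∈ D j k, v i j - loss j k ≤
          sampleExp Z p (fun B => ((1 - δ) * ∑ i ∈ D j k, v i j) * G B j k - loss j k) := by
        intro k
        rw [sE_sub, sE_const, sE_mul]
        rcases Finset.eq_empty_or_nonempty (D j k) with he | ⟨i, hi⟩
        · simp [he]
        · obtain ⟨h1, h2, h3, h4, h5⟩ := hDmem j k i hi
          have hf := hfull j i h1 h2 h3 h4
          rw [h5] at hf
          have h6 := hpr k hf
          have h7 : 0 ≤ ∑ i ∈ D j k, v i j := Finset.sum_nonneg fun i _ => hv i j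
          have h8 := mul_le_mul_of_nonneg_left h6 (mul_nonneg hδ'.le h7)
          nlinarith [mul_nonneg (sq_nonneg δ) h7]
      have hks := Finset.sum_le_sum (fun k (_ : k ∈ Finset.univ) => hk k)
      rw [Finset.sum_sub_distrib, ← Finset.mul_sum] at hks
      have h9 : 0 ≤ ∑ i ∈ keep j, v i j := Finset.sum_nonneg fun i _ => hv i j
      rw [hvtot]
      have := hloss j
      nlinarith
  calc _ ≤ ∑ j, sampleExp Z p (h j) := Finset.sum_le_sum fun j _ => claim2 j
    _ = sampleExp Z p (fun B => ∑ j, h j B) := (sE_sum _ _ _ _).symm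
    _ ≤ _ := by
      apply sE_mono hp.le hp1
      intro B hB
      choose S hS1 hS2 hS3 hS4 using claim1 B hB
      refine (Finset.sum_le_sum fun j _ => hS4 j).trans ?_
      apply gap_ge_family E C v w _ (Finset.inter_subset_left.trans hQE) S _ hS1 hS3
      intro j j' hjj
      rw [Finset.disjoint_left]
      intro i hi hi'
      rcases hS2 j i hi with ⟨a1, a2⟩ | ⟨k, hk⟩ <;> rcases hS2 j' i hi' with ⟨b1, b2⟩ | ⟨k', hk'⟩
      · rw [a2] at b2
        exact hjj (Option.some.inj b2)
      · exact Finset.disjoint_left.1 hAZ a1 (hLZ j' k' hk')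
      · exact Finset.disjoint_left.1 hAZ b1 (hLZ j k hk)
      · exact Finset.disjoint_left.1 (hLd j k j' k' (by simp [hjj])) hk hk'

lemma bucket (ε V : ℝ) (hε : 0 < ε) (hV : 0 ≤ V) :
    ∃ b : ℝ → Fin (⌈Real.log (1 / ε ^ 2) / Real.log (1 + ε ^ 2)⌉₊ + 2),
      (∀ x, 0 < x → b x = 0 → x ≤ ε * V) ∧
      (∀ x, 0 < x → b x = Fin.last _ → V / ε ≤ x) ∧
      (∀ x y, 0 < x → 0 < y → b x ≠ 0 → b x ≠ Fin.last _ → b y = b x → x ≤ (1 + ε ^ 2) * y) := by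
  set K := ⌈Real.log (1 / ε ^ 2) / Real.log (1 + ε ^ 2)⌉₊ with hK
  have hl : 0 < Real.log (1 + ε ^ 2) := Real.log_pos (by nlinarith)
  let fl : ℝ → ℕ := fun x => ⌊Real.log (x / (ε * V)) / Real.log (1 + ε ^ 2)⌋₊
  let b : ℝ → Fin (K + 2) := fun x => if x < ε * V then 0 else if V / ε ≤ x then Fin.last _ else
    ⟨min (1 + fl x) (K + 1), by omega⟩
  have hVpos : ∀ x, ¬ x < ε * V → ¬ V / ε ≤ x → 0 < V := by
    intro x h1 h2
    rcases hV.lt_or_eq with h | h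
    · exact h
    · rw [← h] at h1 h2; simp at h1 h2; linarith
  have hfl : ∀ x, ¬ x < ε * V → ¬ V / ε ≤ x → fl x < K := by
    intro x h1 h2
    have hVp := hVpos x h1 h2
    push Not at h1 h2
    have hx : 0 < x := by nlinarith [mul_pos hε hVp]
    have h0 : 1 ≤ x / (ε * V) := by rw [one_le_div (by positivity)]; exact h1
    have hlt : x / (ε * V) < 1 / ε ^ 2 := by
      rw [div_lt_div_iff₀ (by positivity) (by positivity)]
      rw [lt_div_iff₀ hε] at h2
      nlinarith
    have hlog := Real.log_lt_log (by linarith) hlt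
    rw [Nat.floor_lt (div_nonneg (Real.log_nonneg h0) hl.le)]
    calc _ < Real.log (1 / ε ^ 2) / Real.log (1 + ε ^ 2) := by gcongr
      _ ≤ _ := Nat.le_ceil _
  have hb3 : ∀ x, ¬ x < ε * V → ¬ V / ε ≤ x → (b x).val = 1 + fl x := by
    intro x h1 h2
    have := hfl x h1 h2
    simp only [b, if_neg h1, if_neg h2]
    omega
  have hb1 : ∀ x, x < ε * V → b x = 0 := fun x h => if_pos h
  have hb2 : ∀ x, ¬ x < ε * V → V / ε ≤ x → b x = Fin.last _ := fun x h h' => by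
    simp only [b, if_neg h, if_pos h']
  refine ⟨b, ?_, ?_, ?_⟩
  · intro x _ hx0
    by_contra hcon
    have h1 : ¬ x < ε * V := by linarith
    have hv0 : (b x).val = 0 := by rw [hx0]; rfl
    by_cases h2 : V / ε ≤ x
    · rw [hb2 x h1 h2] at hv0; simp at hv0
    · rw [hb3 x h1 h2] at hv0; omega
  · intro x _ hxl
    by_contra h2
    have hvl : (b x).val = K + 1 := by rw [hxl]; rfl
    by_cases h1 : x < ε * V
    · rw [hb1 x h1] at hvl; simp at hvl
    · rw [hb3 x h1 h2] at hvl
      have := hfl x h1 h2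
      omega
  · intro x y hx hy h0 hl' hyx
    have hx1 : ¬ x < ε * V := fun h => h0 (hb1 x h)
    have hx2 : ¬ V / ε ≤ x := fun h => hl' (hb2 x hx1 h)
    have hy1 : ¬ y < ε * V := fun h => h0 (hyx ▸ hb1 y h)
    have hy2 : ¬ V / ε ≤ y := fun h => hl' (hyx ▸ hb2 y hy1 h)
    have hVp := hVpos x hx1 hx2
    have hfeq : fl x = fl y := by
      have h1 := hb3 x hx1 hx2
      have h2 := hb3 y hy1 hy2
      rw [hyx] at h2
      omega
    have hεV : 0 < ε * V := by positivity
    have hxf : Real.log (x / (ε * V)) / Real.log (1 + ε ^ 2) < fl x + 1 := Nat.lt_floor_add_one _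
    have hyf : (fl y : ℝ) ≤ Real.log (y / (ε * V)) / Real.log (1 + ε ^ 2) := by
      apply Nat.floor_le
      apply div_nonneg (Real.log_nonneg _) hl.le
      rw [one_le_div hεV]; linarith
    rw [div_lt_iff₀ hl] at hxf
    rw [le_div_iff₀ hl] at hyf
    rw [hfeq] at hxf
    have h5 : Real.log (x / (ε * V)) ≤ Real.log ((1 + ε ^ 2) * (y / (ε * V))) := by
      rw [Real.log_mul (by positivity) (by positivity)]
      linarith
    have h6 := (Real.log_le_log_iff (by positivity) (by positivity)).1 h5
    rw [← mul_div_assoc] at h6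
    exact (div_le_div_iff_of_pos_right hεV).1 h6

/-- **GAP Sparsifier** (Theorem 4.1): for every GAP instance, `ε ∈ (0,1/6)` and
`p ∈ (0,1]`, there is a query set `Q ⊆ E` of polyhedral degree
`d ≤ 2·⌈1/ε⌉·(K+2)·(τ(ε²)/p + 1)` (with `K = ⌈ln(1/ε³)/ln(1+ε²)⌉`) which is a
`(1-6ε)`-approximate sparsifier. -/
theorem gap_sparsifier {ι : Type*} [DecidableEq ι] {m : ℕ}
    (E : Finset ι) (C : Fin m → ℝ) (hC : ∀ j, 0 < C j)
    (v w : ι → Fin m → ℝ) (hv : ∀ i j, 0 ≤ v i j) (hw : ∀ i j, 0 ≤ w i j)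
    (hsomewhere : ∀ i ∈ E, ∃ j, w i j ≤ C j)
    (ε p : ℝ) (hε : ε ∈ Set.Ioo (0 : ℝ) (1 / 6)) (hp : p ∈ Set.Ioc (0 : ℝ) 1) :
    ∃ (Q : Finset ι) (d : ℝ), Q ⊆ E ∧ 1 ≤ d ∧
      d ≤ 2 * (⌈1 / ε⌉₊ : ℝ) *
          ((⌈Real.log (1 / ε ^ 3) / Real.log (1 + ε ^ 2)⌉₊ : ℝ) + 2) *
          (tau (ε ^ 2) / p + 1) ∧
      (fun i => (1 / d) * (if i ∈ Q then (1 : ℝ) else 0)) ∈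
        convexHull ℝ {x : ι → ℝ | ∃ S : Finset ι, S ⊆ E ∧
          (∃ σ : ι → Option (Fin m), (∀ i, σ i ≠ none ↔ i ∈ S) ∧
            (∀ j, knapWeight E w σ j ≤ C j)) ∧
          x = fun i => if i ∈ S then (1 : ℝ) else 0} ∧
      (1 - 6 * ε) * sampleExp E p (fun A => gapOPT E C v w A)
        ≤ sampleExp E p (fun A => gapOPT E C v w (Q ∩ A)) := by
  classical
  obtain ⟨hε0, hε6⟩ := hε
  obtain ⟨hp0, hp1⟩ := hp
  have hδ0 : 0 < ε ^ 2 := by positivity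
  have hδ1 : ε ^ 2 < 1 / 2 := by nlinarith
  obtain ⟨hτ1, -⟩ := tau_props (ε ^ 2) hδ0 (by linarith)
  set τ := tau (ε ^ 2) with hτ
  set T := ⌈1 / ε⌉₊ with hT
  set K := ⌈Real.log (1 / ε ^ 3) / Real.log (1 + ε ^ 2)⌉₊ with hK
  set K' := ⌈Real.log (1 / ε ^ 2) / Real.log (1 + ε ^ 2)⌉₊ with hK'
  have hKK : K' + 1 ≤ K := by
    have hl : 0 < Real.log (1 + ε ^ 2) := Real.log_pos (by nlinarith)
    have h1 : Real.log (1 + ε ^ 2) ≤ Real.log (1 / ε) := by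
      apply Real.log_le_log (by positivity)
      rw [le_div_iff₀ hε0]
      nlinarith
    have h2 : Real.log (1 / ε ^ 3) = Real.log (1 / ε ^ 2) + Real.log (1 / ε) := by
      rw [← Real.log_mul (by positivity) (by positivity)]
      congr 1
      field_simp
    have h0 : 0 ≤ Real.log (1 / ε ^ 2) := by
      apply Real.log_nonneg
      rw [le_div_iff₀ hδ0]; linarith
    rw [hK', ← Nat.ceil_add_one (div_nonneg h0 hl.le)]
    apply Nat.ceil_le_ceil
    rw [h2, add_div]
    have : 1 ≤ Real.log (1 / ε) / Real.log (1 + ε ^ 2) := by rw [one_le_div hl]; exact h1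
    linarith
  have hTε : 1 ≤ (T : ℝ) * ε := by
    have := Nat.le_ceil (1 / ε)
    rwa [div_le_iff₀ hε0] at this
  have hT1 : 1 ≤ T := by
    by_contra h
    have : T = 0 := by omega
    rw [this] at hTε; norm_num at hTε
  -- optimal assignments and their expected per-knapsack values
  choose σ hσA hσf hσv using gap_attained E C hC v w
  let V : Fin m → ℝ := fun j => sampleExp E p (fun R => ∑ i ∈ E with σ R i = some j, v i j)
  have hV0 : ∀ j, 0 ≤ V j := fun j => by
    rw [← sE_const E p 0]
    exact sE_mono hp0.le hp1 (fun R _ => Finset.sum_nonneg fun i _ => hv i j)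
  have hOPT : sampleExp E p (fun A => gapOPT E C v w A) = ∑ j, V j := by
    rw [← sE_sum]
    apply sE_congr
    intro R _
    rw [hσv, assignValue, value_split]
  set OPT := sampleExp E p (fun A => gapOPT E C v w A) with hOPTdef
  have hOPT0 : 0 ≤ OPT := by rw [hOPT]; exact Finset.sum_nonneg fun j _ => hV0 j
  choose b hbs hbl hbm using fun j => bucket ε (V j) hε0 (hV0 j)
  obtain ⟨L, hL1, hL2, hL3⟩ := list_family (Λ := Fin T × Fin m × Fin (K' + 2)) E
    (fun a i => w i a.2.1 ≤ C a.2.1 ∧ 0 < v i a.2.1 ∧ b a.2.1 (v i a.2.1) = a.2.2)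
    (fun a i => if a.2.2 = 0 then w i a.2.1 / v i a.2.1 else w i a.2.1)
    (fun a i => w i a.2.1) (fun a => τ / p * C a.2.1) (fun a => C a.2.1)
    (fun a => by have := hC a.2.1; positivity) (fun a => (hC a.2.1).le)
    (fun a i h => h.1) Finset.univ
  let S : Fin m → Finset ι := fun j =>
    Finset.univ.biUnion (fun tk : Fin T × Fin (K' + 2) => L (tk.1, j, tk.2))
  let Z : Fin T → Finset ι := fun t =>
    Finset.univ.biUnion (fun jk : Fin m × Fin (K' + 2) => L (t, jk.1, jk.2))
  let Q : Finset ι := Finset.univ.biUnion S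
  have hmemQ : ∀ i, i ∈ Q ↔ ∃ a, i ∈ L a := by
    intro i
    simp only [Q, S, Finset.mem_biUnion, Finset.mem_univ, true_and]
    constructor
    · rintro ⟨j, tk, h⟩; exact ⟨_, h⟩
    · rintro ⟨⟨t, j, k⟩, h⟩; exact ⟨j, (t, k), h⟩
  have hQE : Q ⊆ E := by
    intro i hi
    obtain ⟨a, ha⟩ := (hmemQ i).1 hi
    exact (hL1 a (Finset.mem_univ _)).1 ha
  have hτp : 0 ≤ τ / p := by positivity
  refine ⟨Q, 2 * (T : ℝ) * ((K : ℝ) + 2) * (τ / p + 1), hQE, ?_, le_rfl, ?_, ?_⟩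
  · have h1 : (1:ℝ) ≤ T := by exact_mod_cast hT1
    have h2 : (1:ℝ) ≤ (T:ℝ) * ((K:ℝ) + 2) := by
      have : (0:ℝ) ≤ K := Nat.cast_nonneg _
      nlinarith
    nlinarith
  · apply degree_lemma E C hC w hw S (Y := 2 * (T : ℝ) * ((K' : ℝ) + 2) * (τ / p + 1))
    · intro j j' hjj
      rw [Finset.disjoint_left]
      intro i hi hi'
      simp only [S, Finset.mem_biUnion, Finset.mem_univ, true_and] at hi hi'
      obtain ⟨a, ha⟩ := hi
      obtain ⟨a', ha'⟩ := hi'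
      exact Finset.disjoint_left.1 (hL2 _ (Finset.mem_univ _) _ (Finset.mem_univ _)
        (by simp [hjj])) ha ha'
    · intro j i hi
      exact hQE (Finset.mem_biUnion.2 ⟨j, Finset.mem_univ _, hi⟩)
    · intro j i hi
      simp only [S, Finset.mem_biUnion, Finset.mem_univ, true_and] at hi
      obtain ⟨a, ha⟩ := hi
      exact ((hL1 _ (Finset.mem_univ _)).2.1 i ha).1
    · positivity
    · have h1 : (1:ℝ) ≤ T := by exact_mod_cast hT1
      have h2 : (K':ℝ) + 1 ≤ K := by exact_mod_cast hKK
      have h3 : (1:ℝ) ≤ T * (τ / p + 1) := by nlinarith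
      nlinarith
    · intro j
      have hsum : ∑ i ∈ S j, w i j ≤ ∑ tk : Fin T × Fin (K' + 2), (τ / p * C j + C j) := by
        rw [Finset.sum_biUnion]
        · exact Finset.sum_le_sum fun tk _ => (hL1 (tk.1, j, tk.2) (Finset.mem_univ _)).2.2
        · intro tk _ tk' _ hne
          apply hL2 _ (Finset.mem_univ _) _ (Finset.mem_univ _)
          intro h
          apply hne
          simp only [Prod.mk.injEq, true_and] at h
          exact Prod.ext h.1 h.2
      rw [Finset.sum_const, Finset.card_univ, Fintype.card_prod, Fintype.card_fin,
        Fintype.card_fin, nsmul_eq_mul] at hsum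
      push_cast at hsum
      calc _ ≤ 2 * ((T : ℝ) * ((K' : ℝ) + 2) * (τ / p * C j + C j)) := by linarith
        _ = _ := by ring
  · -- pigeonhole over phases
    have hZd : ∀ t t', t ≠ t' → Disjoint (Z t) (Z t') := by
      intro t t' htt
      rw [Finset.disjoint_left]
      intro i hi hi'
      simp only [Z, Finset.mem_biUnion, Finset.mem_univ, true_and] at hi hi'
      obtain ⟨a, ha⟩ := hi
      obtain ⟨a', ha'⟩ := hi'
      exact Finset.disjoint_left.1 (hL2 _ (Finset.mem_univ _) _ (Finset.mem_univ _)
        (by simp [htt])) ha ha'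
    have hZQ : ∀ t, Z t ⊆ Q := by
      intro t i hi
      simp only [Z, Finset.mem_biUnion, Finset.mem_univ, true_and] at hi
      obtain ⟨a, ha⟩ := hi
      exact (hmemQ i).2 ⟨_, ha⟩
    have helim : ∀ R i, 0 ≤ (σ R i).elim 0 (v i) := by
      intro R i
      cases h : σ R i with
      | none => simp
      | some j => simpa using hv i j
    obtain ⟨t, -, ht⟩ : ∃ t ∈ (Finset.univ : Finset (Fin T)),
        sampleExp E p (fun R => ∑ i ∈ Z t, (σ R i).elim 0 (v i)) ≤ ε * OPT := by
      apply Finset.exists_le_of_sum_le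
      · exact ⟨⟨0, hT1⟩, Finset.mem_univ _⟩
      · rw [← sE_sum, Finset.sum_const, Finset.card_univ, Fintype.card_fin, nsmul_eq_mul]
        have h1 : sampleExp E p (fun R => ∑ t, ∑ i ∈ Z t, (σ R i).elim 0 (v i)) ≤ OPT := by
          apply sE_mono hp0.le hp1
          intro R _
          rw [hσv, assignValue, ← Finset.sum_biUnion (fun t _ t' _ h => hZd t t' h)]
          apply Finset.sum_le_sum_of_subset_of_nonneg
          · intro i hi
            obtain ⟨t, _, hi⟩ := Finset.mem_biUnion.1 hi
            exact hQE (hZQ t hi)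
          · intro i _ _; exact helim R i
        nlinarith
    let J : Finset (Fin m) := Finset.univ.filter
      (fun j => τ / p * C j ≤ ∑ i ∈ L (t, j, Fin.last _), w i j)
    let r : Fin m → Finset ι → ℝ := fun j R => ∑ i ∈ E \ Z t with σ R i = some j, v i j
    let Φ : Fin m → Finset ι → ℝ := fun j R =>
      if j ∈ J then V j else (1 - 2 * ε ^ 2) * r j R - ε * V j
    have hfull : ∀ j, ∀ i ∈ E, i ∉ Q → 0 < v i j → w i j ≤ C j →
        τ / p * C j ≤ ∑ i' ∈ L (t, j, b j (v i j)), w i' j ∧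
        ∀ i' ∈ L (t, j, b j (v i j)),
          (if b j (v i j) = 0 then w i' j / v i' j else w i' j) ≤
          (if b j (v i j) = 0 then w i j / v i j else w i j) := by
      intro j i hi hiQ hvi hwi
      exact hL3 i hi (fun a _ ha => hiQ ((hmemQ i).2 ⟨a, ha⟩)) (t, j, b j (v i j))
        (Finset.mem_univ _) ⟨hwi, hvi, rfl⟩
    have hLP : ∀ j k, ∀ i ∈ L (t, j, k), w i j ≤ C j ∧ 0 < v i j ∧ b j (v i j) = k :=
      fun j k i hi => (hL1 (t, j, k) (Finset.mem_univ _)).2.1 i hi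
    have hcore : ∀ A, A ⊆ E \ Z t → ∀ B', B' ⊆ Z t →
        ∑ j, Φ j (A ∪ B') ≤ sampleExp (Z t) p (fun B => gapOPT E C v w (Q ∩ (A ∪ B))) := by
      intro A hA B' hB'
      let ρ : ι → Option (Fin m) := fun i => if i ∈ Z t then none else σ (A ∪ B') i
      have hρsome : ∀ i j, ρ i = some j ↔ i ∉ Z t ∧ σ (A ∪ B') i = some j := by
        intro i j
        by_cases h : i ∈ Z t <;> simp [ρ, h]
      have key := core E C hC v w hv hw p hp0 hp1 (ε ^ 2) hδ0 hδ1 Q (Z t) (hZQ t) hQE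
        (fun j k => L (t, j, k))
        (fun j k i hi => Finset.mem_biUnion.2 ⟨(j, k), Finset.mem_univ _, hi⟩)
        (fun j k j' k' h => hL2 _ (Finset.mem_univ _) _ (Finset.mem_univ _) (by
          intro h'; apply h; exact (Prod.mk.inj h').2))
        (fun j k i hi => (hLP j k i hi).1)
        (fun j i => b j (v i j)) (Fin.last _) J V hV0
        (fun j k => if k = 0 then ε * V j else 0)
        (fun j k => by
          have := hV0 j
          split_ifs
          · positivity
          · exact le_rfl)
        ε (fun j => by simp)
        (fun j hj => (Finset.mem_filter.1 hj).2)
        (fun j hj i hi => by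
          obtain ⟨h1, h2, h3⟩ := hLP j _ i hi
          have h4 := hbl j _ h2 h3
          rw [div_le_iff₀ hε0] at h4
          have : 0 ≤ (1 - ε ^ 2 - ε) * v i j := mul_nonneg (by nlinarith) h2.le
          nlinarith)
        (fun j i hi hiQ hvi hwi => (hfull j i hi hiQ hvi hwi).1)
        ?_ A
        (Finset.disjoint_of_subset_left hA Finset.sdiff_disjoint) ρ ?_ ?_
      · refine le_trans (le_of_eq ?_) key
        apply Finset.sum_congr rfl
        intro j _
        simp only [Φ, r]
        have : (E \ Z t).filter (fun i => σ (A ∪ B') i = some j)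
            = E.filter (fun i => ρ i = some j) := by
          ext i
          simp only [Finset.mem_filter, Finset.mem_sdiff, hρsome]
          tauto
        rw [this]
      · intro j hj k D hD hDw N0 hN0 hN0w
        rcases Finset.eq_empty_or_nonempty D with rfl | ⟨i0, hi0⟩
        · refine ⟨∅, by simp, by simp, ?_⟩
          have := hV0 j
          simp only [Finset.sum_empty, mul_zero, zero_sub]
          split_ifs
          · have : 0 ≤ ε * V j := by positivity
            linarith
          · simp
        have hdom : ∀ i ∈ D, ∀ i' ∈ N0, (if k = 0 then w i' j / v i' j else w i' j) ≤
            (if k = 0 then w i j / v i j else w i j) := by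
          intro i hi i' hi'
          obtain ⟨h1, h2, h3, h4, h5⟩ := hD i hi
          have := (hfull j i h1 h2 h3 h4).2
          rw [h5] at this
          exact this i' (hN0 hi')
        by_cases hk0 : k = 0
        · simp only [if_pos hk0] at hdom ⊢
          obtain ⟨N, hN1, hN2, hN3⟩ := small_replace D N0 (fun i => v i j) (fun i => w i j) (C j)
            (ε * V j) (by have := hV0 j; positivity) (fun i => hw i j) (hC j) hDw hN0w
            (fun i hi => (hD i hi).2.2.1)
            (fun i hi => by
              obtain ⟨h1, h2, h3⟩ := hLP j k i (hN0 hi)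
              exact hbs j _ h2 (h3.trans hk0))
            (fun i hi i' hi' => by
              have h1 := (hD i hi).2.2.1
              have h2 := (hLP j k i' (hN0 hi')).2.1
              exact (div_le_div_iff₀ h2 h1).1 (hdom i hi i' hi'))
          refine ⟨N, hN1, hN2, ?_⟩
          have : 0 ≤ ∑ i ∈ D, v i j := Finset.sum_nonneg fun i _ => hv i j
          have := mul_nonneg hδ0.le this
          nlinarith
        · simp only [if_neg hk0] at hdom ⊢
          have hkl : k ≠ Fin.last _ := by
            intro hkl
            apply hj
            obtain ⟨h1, h2, h3, h4, h5⟩ := hD i0 hi0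
            have := (hfull j i0 h1 h2 h3 h4).1
            rw [h5, hkl] at this
            exact Finset.mem_filter.2 ⟨Finset.mem_univ _, this⟩
          obtain ⟨N, hN1, hN2, hN3⟩ := mid_replace D N0 (fun i => v i j) (fun i => w i j) (C j)
            (ε ^ 2) (hC j) hDw hN0w hdom
            (fun i hi i' hi' => by
              obtain ⟨h1, h2, h3, h4, h5⟩ := hD i hi
              obtain ⟨g1, g2, g3⟩ := hLP j k i' (hN0 hi')
              exact hbm j _ _ h3 g2 (by rw [h5]; exact hk0) (by rw [h5]; exact hkl)
                (by rw [h5, g3]))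
          refine ⟨N, hN1, hN2, ?_⟩
          have h0 : 0 ≤ ∑ i ∈ N, v i j := Finset.sum_nonneg fun i _ => hv i j
          have h1 := mul_le_mul_of_nonneg_left hN3 (show 0 ≤ 1 - ε ^ 2 by linarith)
          have h2 := mul_nonneg (sq_nonneg (ε ^ 2)) h0
          nlinarith
      · intro i hi
        obtain ⟨j, hj⟩ := Option.ne_none_iff_exists'.1 hi
        obtain ⟨h1, h2⟩ := (hρsome i j).1 hj
        have := hσA (A ∪ B') i (by simp [h2])
        rcases Finset.mem_union.1 this with h | h
        · exact h
        · exact absurd (hB' h) h1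
      · intro j
        refine le_trans ?_ (hσf (A ∪ B') j)
        unfold knapWeight
        apply Finset.sum_le_sum
        intro i _
        split_ifs with h1 h2 h2
        · exact le_rfl
        · exact absurd ((hρsome i j).1 h1).2 h2
        · exact hw i j
        · exact le_rfl
    have hEun : E = (E \ Z t) ∪ Z t :=
      (Finset.sdiff_union_of_subset ((hZQ t).trans hQE)).symm
    have hsplit : ∀ f : Finset ι → ℝ, sampleExp E p f
        = sampleExp (E \ Z t) p (fun A => sampleExp (Z t) p (fun B => f (A ∪ B))) := by
      intro f
      conv_lhs => rw [hEun]
      exact sE_union _ _ _ Finset.sdiff_disjoint f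
    have hmain : sampleExp E p (fun R => ∑ j, Φ j R)
        ≤ sampleExp E p (fun A => gapOPT E C v w (Q ∩ A)) := by
      rw [hsplit, hsplit]
      apply sE_mono hp0.le hp1
      intro A hA
      rw [← sE_const (Z t) p (sampleExp (Z t) p (fun B => gapOPT E C v w (Q ∩ (A ∪ B))))]
      exact sE_mono hp0.le hp1 (fun B' hB' => hcore A hA B' hB')
    refine le_trans ?_ hmain
    rw [sE_sum]
    have hr0 : ∀ j, 0 ≤ sampleExp E p (r j) := fun j => by
      rw [← sE_const E p 0]
      exact sE_mono hp0.le hp1 (fun R _ => Finset.sum_nonneg fun i _ => hv i j)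
    have hrV : ∀ j, sampleExp E p (r j) ≤ V j := fun j => by
      apply sE_mono hp0.le hp1
      intro R _
      apply Finset.sum_le_sum_of_subset_of_nonneg
      · exact Finset.filter_subset_filter _ Finset.sdiff_subset
      · intro i _ _; exact hv i j
    have hΦ : ∀ j, (1 - 2 * ε ^ 2) * sampleExp E p (r j) - ε * V j ≤ sampleExp E p (Φ j) := by
      intro j
      by_cases hj : j ∈ J
      · simp only [Φ, if_pos hj]
        rw [sE_const]
        have h1 := hr0 j
        have h2 := hrV j
        have h3 := mul_nonneg hε0.le (hV0 j)
        have h4 := mul_nonneg hδ0.le h1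
        linarith
      · simp only [Φ, if_neg hj]
        rw [sE_sub, sE_const, sE_mul]
    have hrsum : OPT - ε * OPT ≤ ∑ j, sampleExp E p (r j) := by
      rw [← sE_sum]
      have h1 : sampleExp E p (fun R => ∑ j, r j R) =
          OPT - sampleExp E p (fun R => ∑ i ∈ Z t, (σ R i).elim 0 (v i)) := by
        rw [hOPTdef, ← sE_sub]
        apply sE_congr
        intro R _
        simp only [r]
        rw [hσv, assignValue, ← value_split, eq_sub_iff_add_eq]
        exact Finset.sum_sdiff ((hZQ t).trans hQE)
      rw [h1]
      linarith
    have hfin := Finset.sum_le_sum (fun j (_ : j ∈ Finset.univ) => hΦ j)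
    rw [Finset.sum_sub_distrib, ← Finset.mul_sum, ← Finset.mul_sum, ← hOPT] at hfin
    refine le_trans ?_ hfin
    have h1 := mul_le_mul_of_nonneg_left hrsum (show 0 ≤ 1 - 2 * ε ^ 2 by linarith)
    have h2 : 0 ≤ ((1 - 2 * ε ^ 2) * (1 - ε) - ε - (1 - 6 * ε)) * OPT := by
      apply mul_nonneg _ hOPT0
      nlinarith [mul_pos hε0 hδ0]
    nlinarith
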